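/- Let T = {2314, 2431, 3412} (patterns of length 4). Then the generating function for T-avoiders satisfies, as formal power series over ℚ, (1 - x(1-2x)·C(x)^2)·F_T(x) = 1 + x^2·(1-x)·C(x)^4, where C(x) is the Catalan number generating function; that is, F_T(x) = (1 + x^2(1-x)C(x)^4)/(1 - x(1-2x)C(x)^2). -/

import Mathlib

open PowerSeries

/-- A permutation `π` of `{0,…,n-1}` contains the pattern `σ` (of length `k`) if there is an
order-embedding of positions on which the values of `π` appear in the same relative order as
the values of `σ`. -/
def ContainsPattern {n k : ℕ} (π : Equiv.Perm (Fin n)) (σ : Fin k → Fin k) : Prop :=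
  ∃ f : Fin k ↪o Fin n, ∀ a b : Fin k, σ a < σ b ↔ π (f a) < π (f b)

/-- The number of permutations of length `n` avoiding every pattern in `T`. -/
noncomputable def avoiderCount (T : Set (Fin 4 → Fin 4)) (n : ℕ) : ℕ :=
  Nat.card {π : Equiv.Perm (Fin n) // ∀ σ ∈ T, ¬ ContainsPattern π σ}

/-- The generating function `F_T(x) = ∑_n |S_n(T)| xⁿ` over `ℚ`. -/
noncomputable def avoiderGF (T : Set (Fin 4 → Fin 4)) : PowerSeries ℚ :=
  PowerSeries.mk fun n => (avoiderCount T n : ℚ)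

/-- The generating function of the Catalan numbers over `ℚ`. -/
noncomputable def catalanGF : PowerSeries ℚ :=
  PowerSeries.mk fun n => (catalan n : ℚ)

/-!
Avoiders are grown by prepending a first letter. A letter `s` is an active site of an avoider `p` if
it can be prepended, and prepending an active site `x` keeps all sites `≥ x` (shifted by one) and
the site `0`. Which of the sites `0 < s ≤ x` survive is decided by pairs of letters of `p`. Apart
from the decreasing words, every avoider has at most one pair `(x, s)` for which `s` survives the
use of `x`, and that pair is of one of two kinds. The kind and the number of active sites therefore
determine the same data for the children, so the avoiders form a generating tree with four families
of labels. Its generating functions are the unique power series solution of a linear system, which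
an ansatz in powers of `C = 1 + X * C ^ 2` solves.
-/

/-! ### Generating trees -/

section GeneratingTree

variable {α β : Type*}

/-- The number of nodes at depth `d` below `a` in the generating tree whose succession rule is
`children`. -/
def nodeCount (children : α → Multiset α) : ℕ → α → ℕ
  | 0, _ => 1
  | d + 1, a => ((children a).map (nodeCount children d)).sum

theorem nodeCount_eq_of_rel {children₁ : α → Multiset α} {children₂ : β → Multiset β}
    {R : α → β → Prop} (hR : ∀ a b, R a b → Multiset.Rel R (children₁ a) (children₂ b))
    (d : ℕ) {a : α} {b : β} (hab : R a b) :
    nodeCount children₁ d a = nodeCount children₂ d b := by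
  induction d generalizing a b with
  | zero => rfl
  | succ d ih =>
    refine congrArg Multiset.sum (Multiset.rel_eq.1 (Multiset.rel_map.2 ?_))
    exact (hR a b hab).mono fun _ _ _ _ h => ih h

variable {R : Type*} [CommRing R]

variable (R) in
/-- The generating function, by depth, of the nodes below `a` in the generating tree. -/
def treeGF (children : α → Multiset α) (a : α) : R⟦X⟧ :=
  PowerSeries.mk fun d => (nodeCount children d a : R)

theorem treeGF_eq (children : α → Multiset α) (a : α) :
    treeGF R children a = 1 + X * ((children a).map (treeGF R children)).sum := by
  ext d
  cases d with
  | zero => simp [treeGF, nodeCount]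
  | succ d =>
    simp [treeGF, nodeCount, coeff_succ_X_mul, coeff_one, map_multiset_sum,
      Nat.cast_multiset_sum, Function.comp_def]

theorem eq_zero_of_eq_X_mul_sum_children {children : α → Multiset α} {E : α → R⟦X⟧}
    (hE : ∀ a, E a = X * ((children a).map E).sum) (a : α) : E a = 0 := by
  ext d
  induction d generalizing a with
  | zero => rw [hE]; simp
  | succ d ih =>
    rw [hE, coeff_succ_X_mul, map_multiset_sum, Multiset.map_map]
    exact Multiset.sum_eq_zero (by simpa using fun b _ => ih b)

theorem eq_mul_treeGF {children : α → Multiset α} {H : α → R⟦X⟧} {c : R⟦X⟧}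
    (hH : ∀ a, H a = c + X * ((children a).map H).sum) (a : α) :
    H a = c * treeGF R children a := by
  refine sub_eq_zero.1 (eq_zero_of_eq_X_mul_sum_children (children := children)
    (E := fun a => H a - c * treeGF R children a) (fun a => ?_) a)
  rw [Multiset.sum_map_sub, Multiset.sum_map_mul_left]
  linear_combination hH a - c * treeGF_eq (R := R) children a

end GeneratingTree

/-! ### Ranks in a finite set -/

section RankAbove

variable {α : Type*} [LinearOrder α] {S : Finset α} {a b : α}

/-- The number of elements of `S` above `a`, so that the maximum of `S` has rank `0`. -/
def rankAbove (S : Finset α) (a : α) : ℕ := (S.filter (a < ·)).card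

theorem rankAbove_lt_rankAbove (hb : b ∈ S) (hab : a < b) : rankAbove S b < rankAbove S a := by
  refine Finset.card_lt_card (Finset.ssubset_iff_of_subset ?_ |>.2 ⟨b, by simp [hb, hab], by simp⟩)
  exact Finset.monotone_filter_right S fun _ _ h => hab.trans h

theorem rankAbove_inj (ha : a ∈ S) (hb : b ∈ S) : rankAbove S a = rankAbove S b ↔ a = b := by
  refine ⟨fun h => ?_, congrArg _⟩
  rcases lt_trichotomy a b with hab | hab | hab
  · exact absurd h (rankAbove_lt_rankAbove hb hab).ne'
  · exact hab
  · exact absurd h (rankAbove_lt_rankAbove ha hab).ne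

theorem card_filter_le_add_rankAbove (S : Finset α) (a : α) :
    (S.filter (· ≤ a)).card + rankAbove S a = S.card := by
  simpa [rankAbove] using Finset.card_filter_add_card_filter_not (s := S) (· ≤ a)

theorem rankAbove_lt_card (ha : a ∈ S) : rankAbove S a < S.card := by
  have hpos : 0 < (S.filter (· ≤ a)).card := Finset.card_pos.2 ⟨a, by simp [ha]⟩
  have := card_filter_le_add_rankAbove S a
  omega

theorem map_rankAbove_eq_range (S : Finset α) :
    S.val.map (rankAbove S) = Multiset.range S.card := by
  have hinj : Set.InjOn (rankAbove S) S := fun _ ha _ hb => (rankAbove_inj ha hb).1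
  have himage : S.image (rankAbove S) = Finset.range S.card := by
    refine Finset.eq_of_subset_of_card_le (fun r hr => ?_) ?_
    · obtain ⟨a, ha, rfl⟩ := Finset.mem_image.1 hr
      exact Finset.mem_range.2 (rankAbove_lt_card ha)
    · rw [Finset.card_image_of_injOn hinj, Finset.card_range]
  rw [← Finset.image_val_of_injOn hinj, himage, Finset.range_val]

theorem rel_map_of_rankAbove {β γ : Type*} {R : β → γ → Prop} {f : α → β} {g : ℕ → γ}
    (h : ∀ a ∈ S, R (f a) (g (rankAbove S a))) :
    Multiset.Rel R (S.val.map f) ((Multiset.range S.card).map g) := by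
  rw [← map_rankAbove_eq_range, Multiset.map_map]
  exact Multiset.rel_map.2 (Multiset.rel_refl_of_refl_on h)

theorem rel_map_cons_of_erase {β γ : Type*} {R : β → γ → Prop} {f : α → β} {c : γ}
    {M : Multiset γ} (ha : a ∈ S) (hc : R (f a) c)
    (hM : Multiset.Rel R ((S.erase a).val.map f) M) :
    Multiset.Rel R (S.val.map f) (c ::ₘ M) := by
  rw [← Finset.insert_erase ha, Finset.insert_val_of_notMem (Finset.notMem_erase a S),
    Multiset.map_cons]
  exact Multiset.Rel.cons hc hM

theorem rankAbove_eq_zero (h : ∀ s ∈ S, s ≤ a) : rankAbove S a = 0 := by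
  simpa [rankAbove, Finset.filter_eq_empty_iff] using h

theorem rankAbove_add_one_of_forall_le (ha : a ∈ S) (h : ∀ s ∈ S, a ≤ s) :
    rankAbove S a + 1 = S.card := by
  have hfilter : S.filter (· ≤ a) = {a} := by
    ext s
    simp only [Finset.mem_filter, Finset.mem_singleton]
    exact ⟨fun hs => le_antisymm hs.2 (h s hs.1), by rintro rfl; exact ⟨ha, le_rfl⟩⟩
  rw [← card_filter_le_add_rankAbove S a, hfilter, Finset.card_singleton, add_comm]

theorem rankAbove_erase (hba : b ≤ a) : rankAbove (S.erase b) a = rankAbove S a := by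
  rw [rankAbove, rankAbove, Finset.filter_erase, Finset.erase_eq_of_notMem (by simp [hba.not_gt])]

end RankAbove

/-! ### Words of permutations and insertion of a first letter -/

/-- The increasing map `ℕ → ℕ` omitting the value `a`; the analogue of `Fin.succAbove` on `ℕ`. -/
def shiftAbove (a v : ℕ) : ℕ := if v < a then v else v + 1

theorem shiftAbove_strictMono (a : ℕ) : StrictMono (shiftAbove a) := fun u v huv => by
  grind [shiftAbove]

theorem shiftAbove_succ_shiftAbove {a b : ℕ} (hab : a ≤ b) (v : ℕ) :
    shiftAbove (b + 1) (shiftAbove a v) = shiftAbove a (shiftAbove b v) := by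
  grind [shiftAbove]

/-- Put the letter `a` in front of the word `p`, raising the letters `≥ a` of `p` to make room. -/
def prepend (a : ℕ) (p : List ℕ) : List ℕ := a :: p.map (shiftAbove a)

@[simp]
theorem length_prepend (a : ℕ) (p : List ℕ) : (prepend a p).length = p.length + 1 := by
  simp [prepend]

/-- The letters of `p` are exactly `0, …, p.length - 1`. -/
def IsPermWord (p : List ℕ) : Prop := ∀ v, v ∈ p ↔ v < p.length

theorem mem_prepend {a v : ℕ} {p : List ℕ} :
    v ∈ prepend a p ↔ v = a ∨ v < a ∧ v ∈ p ∨ a < v ∧ v - 1 ∈ p := by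
  simp only [prepend, List.mem_cons, List.mem_map]
  constructor
  · rintro (rfl | ⟨u, hu, rfl⟩)
    · simp
    · grind [shiftAbove]
  · rintro (rfl | ⟨hva, hv⟩ | ⟨hav, hv⟩)
    · simp
    · exact Or.inr ⟨v, hv, by grind [shiftAbove]⟩
    · exact Or.inr ⟨v - 1, hv, by grind [shiftAbove]⟩

theorem isPermWord_prepend {a : ℕ} {p : List ℕ} (hp : IsPermWord p) (ha : a ≤ p.length) :
    IsPermWord (prepend a p) := by
  intro v
  rw [mem_prepend, hp v, hp (v - 1), length_prepend]
  omega

section PermWord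

variable {n : ℕ}

/-- The one-line notation of `π`, with values in `{0, …, n - 1}`. -/
def word (π : Equiv.Perm (Fin n)) : List ℕ := List.ofFn fun i => (π i : ℕ)

@[simp]
theorem length_word (π : Equiv.Perm (Fin n)) : (word π).length = n := by
  simp [word]

/-- The permutation with first value `a` whose remaining values are in the same relative order as
those of `π`. -/
def consPerm (a : Fin (n + 1)) (π : Equiv.Perm (Fin n)) : Equiv.Perm (Fin (n + 1)) :=
  (finSuccEquiv n).trans ((Equiv.optionCongr π).trans (finSuccEquiv' a).symm)

theorem consPerm_zero (a : Fin (n + 1)) (π : Equiv.Perm (Fin n)) : consPerm a π 0 = a := by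
  simp [consPerm]

theorem consPerm_succ (a : Fin (n + 1)) (π : Equiv.Perm (Fin n)) (i : Fin n) :
    consPerm a π i.succ = a.succAbove (π i) := by
  simp [consPerm]

theorem word_consPerm (a : Fin (n + 1)) (π : Equiv.Perm (Fin n)) :
    word (consPerm a π) = prepend a (word π) := by
  simp only [word, prepend, List.ofFn_succ, consPerm_zero, consPerm_succ, List.map_ofFn]
  congr 2
  funext i
  simp only [Function.comp, shiftAbove, Fin.succAbove, Fin.lt_def, Fin.val_castSucc]
  split_ifs <;> simp

theorem consPerm_bijective :
    Function.Bijective fun x : Equiv.Perm (Fin n) × Fin (n + 1) => consPerm x.2 x.1 := by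
  rw [Fintype.bijective_iff_injective_and_card]
  refine ⟨?_, by simp [Fintype.card_perm, Nat.factorial_succ, mul_comm]⟩
  rintro ⟨π, a⟩ ⟨ρ, b⟩ (h : consPerm a π = consPerm b ρ)
  obtain rfl : a = b := by simpa only [consPerm_zero] using DFunLike.congr_fun h 0
  have hπ : π = ρ := Equiv.ext fun i => Fin.succAbove_right_injective (p := a) <| by
    simpa only [consPerm_succ] using DFunLike.congr_fun h i.succ
  rw [hπ]

/-- The succession rule that prepends to `p` each letter in `sites p`. -/
def prependChildren (sites : List ℕ → Finset ℕ) (p : List ℕ) : Multiset (List ℕ) :=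
  (sites p).val.map (prepend · p)

variable {P : List ℕ → Prop} {sites : List ℕ → Finset ℕ}

open Classical in
theorem sum_word_succ (hP : ∀ a p, P (prepend a p) → P p)
    (hsites : ∀ p, P p → ∀ a, a ∈ sites p ↔ a ≤ p.length ∧ P (prepend a p)) (f : List ℕ → ℕ) :
    ∑ π : Equiv.Perm (Fin (n + 1)) with P (word π), f (word π) =
      ∑ π : Equiv.Perm (Fin n) with P (word π), ((prependChildren sites (word π)).map f).sum := by
  simp only [Finset.sum_filter]
  rw [← consPerm_bijective.sum_comp, Fintype.sum_prod_type]
  refine Finset.sum_congr rfl fun π _ => ?_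
  simp only [word_consPerm]
  split_ifs with hπ
  · have hfilter : sites (word π) =
        (Finset.range (n + 1)).filter fun a => P (prepend a (word π)) := by
      ext a
      simp [hsites _ hπ]
    rw [Fin.sum_univ_eq_sum_range fun a => if P (prepend a (word π)) then f (prepend a (word π))
      else 0, ← Finset.sum_filter, ← hfilter]
    rw [prependChildren, Multiset.map_map]
    rfl
  · exact Finset.sum_eq_zero fun a _ => if_neg fun h => hπ (hP _ _ h)

open Classical in
theorem sum_nodeCount_word (hnil : P []) (hP : ∀ a p, P (prepend a p) → P p)
    (hsites : ∀ p, P p → ∀ a, a ∈ sites p ↔ a ≤ p.length ∧ P (prepend a p)) (n d : ℕ) :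
    ∑ π : Equiv.Perm (Fin n) with P (word π), nodeCount (prependChildren sites) d (word π) =
      nodeCount (prependChildren sites) (n + d) [] := by
  induction n generalizing d with
  | zero => simp [word, hnil]
  | succ n ih =>
    rw [sum_word_succ hP hsites, add_assoc, add_comm 1 d, ← ih]
    rfl

theorem card_perm_eq_nodeCount (hnil : P []) (hP : ∀ a p, P (prepend a p) → P p)
    (hsites : ∀ p, P p → ∀ a, a ∈ sites p ↔ a ≤ p.length ∧ P (prepend a p)) (n : ℕ) :
    Nat.card {π : Equiv.Perm (Fin n) // P (word π)} =
      nodeCount (prependChildren sites) n [] := by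
  classical
  rw [Nat.card_eq_fintype_card, Fintype.card_subtype, Finset.card_eq_sum_ones]
  exact sum_nodeCount_word hnil hP hsites n 0

theorem containsPattern_iff_exists_ofFn_sublist {k : ℕ} (π : Equiv.Perm (Fin n))
    (σ : Fin k → Fin k) :
    ContainsPattern π σ ↔
      ∃ w : Fin k → ℕ, (List.ofFn w).Sublist (word π) ∧ ∀ i j, σ i < σ j ↔ w i < w j := by
  simp only [List.sublist_iff_exists_fin_orderEmbedding_get_eq]
  constructor
  · rintro ⟨f, hf⟩
    refine ⟨fun i => π (f i), ⟨(Fin.castOrderIso (by simp)).toOrderEmbedding.trans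
      (f.trans (Fin.castOrderIso (by simp)).toOrderEmbedding), fun i => ?_⟩, hf⟩
    simp only [word, List.get_eq_getElem, List.getElem_ofFn]
    rfl
  · rintro ⟨w, ⟨f, hf⟩, hw⟩
    refine ⟨(Fin.castOrderIso (by simp)).toOrderEmbedding.trans
      (f.trans (Fin.castOrderIso (by simp)).toOrderEmbedding), fun i j => ?_⟩
    have hget (i : Fin k) := hf (Fin.cast (by simp) i)
    simp only [word, List.get_eq_getElem, List.getElem_ofFn, Fin.val_cast, Fin.eta] at hget
    rw [hw, hget, hget]
    rfl

end PermWord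

theorem exists_sublist_cons {α : Type*} {R : List α → Prop} {a : α} {p : List α} :
    (∃ l, l.Sublist (a :: p) ∧ R l) ↔
      (∃ l, l.Sublist p ∧ R l) ∨ ∃ l, l.Sublist p ∧ R (a :: l) := by
  simp only [List.sublist_cons_iff]
  grind

theorem exists_sublist_map {α β : Type*} {R : List β → Prop} {f : α → β} {p : List α} :
    (∃ l, l.Sublist (p.map f) ∧ R l) ↔ ∃ l : List α, l.Sublist p ∧ R (l.map f) := by
  simp only [List.sublist_map_iff]
  grind

theorem exists_pair_sublist_map {α β : Type*} {Q : β → β → Prop} {f : α → β} {p : List α} :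
    (∃ c d, [c, d].Sublist (p.map f) ∧ Q c d) ↔ ∃ c d, [c, d].Sublist p ∧ Q (f c) (f d) := by
  constructor
  · rintro ⟨c, d, hcd, hQ⟩
    obtain ⟨l, hl, hmap⟩ := List.sublist_map_iff.1 hcd
    obtain ⟨c, d, rfl⟩ := List.length_eq_two.1 (by simpa using congrArg List.length hmap.symm)
    obtain ⟨rfl, rfl⟩ : _ = f c ∧ _ = f d := by simpa using hmap
    exact ⟨c, d, hl, hQ⟩
  · rintro ⟨c, d, hcd, hQ⟩
    exact ⟨f c, f d, hcd.map f, hQ⟩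

/-! ### Active sites -/

/-- The word is order-isomorphic to `2314`, `2431` or `3412`. -/
def IsForbidden : List ℕ → Prop
  | [a, b, c, d] => (c < a ∧ a < b ∧ b < d) ∨ (d < a ∧ a < c ∧ c < b) ∨ (c < d ∧ d < a ∧ a < b)
  | _ => False

theorem isForbidden_iff {l : List ℕ} :
    IsForbidden l ↔ ∃ a b c d, l = [a, b, c, d] ∧
      ((c < a ∧ a < b ∧ b < d) ∨ (d < a ∧ a < c ∧ c < b) ∨ (c < d ∧ d < a ∧ a < b)) := by
  rcases l with _ | ⟨a, _ | ⟨b, _ | ⟨c, _ | ⟨d, _ | ⟨e, l⟩⟩⟩⟩⟩ <;> simp [IsForbidden]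

theorem isForbidden_map {f : ℕ → ℕ} (hf : StrictMono f) (l : List ℕ) :
    IsForbidden (l.map f) ↔ IsForbidden l := by
  rcases l with _ | ⟨a, _ | ⟨b, _ | ⟨c, _ | ⟨d, _ | ⟨e, l⟩⟩⟩⟩⟩ <;>
    simp [IsForbidden, hf.lt_iff_lt]

theorem IsForbidden.head_lt {a b : ℕ} {l : List ℕ} (h : IsForbidden (a :: b :: l)) : a < b := by
  obtain ⟨_, _, _, _, hl, h⟩ := isForbidden_iff.1 h
  grind

theorem IsForbidden.exists_lt {a : ℕ} {l : List ℕ} (h : IsForbidden (a :: l)) : ∃ b ∈ l, b < a := by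
  obtain ⟨_, _, _, _, hl, h⟩ := isForbidden_iff.1 h
  obtain ⟨rfl, rfl⟩ := List.cons.inj hl
  simp only [List.mem_cons, List.not_mem_nil, or_false, exists_eq_or_imp, exists_eq_left]
  omega

theorem IsForbidden.exists_gt {a : ℕ} {l : List ℕ} (h : IsForbidden (a :: l)) : ∃ b ∈ l, a < b := by
  obtain ⟨_, _, _, _, hl, h⟩ := isForbidden_iff.1 h
  obtain ⟨rfl, rfl⟩ := List.cons.inj hl
  simp only [List.mem_cons, List.not_mem_nil, or_false, exists_eq_or_imp, exists_eq_left]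
  omega

/-- No subword of `p` is order-isomorphic to `2314`, `2431` or `3412`. -/
def Avoids (p : List ℕ) : Prop := ¬ ∃ l, l.Sublist p ∧ IsForbidden l

theorem avoids_nil : Avoids [] := by
  simp [Avoids, IsForbidden]

theorem avoids_word_iff {n : ℕ} (π : Equiv.Perm (Fin n)) :
    Avoids (word π) ↔
      ∀ σ ∈ ({![1, 2, 0, 3], ![1, 3, 2, 0], ![2, 3, 0, 1]} : Set (Fin 4 → Fin 4)),
        ¬ ContainsPattern π σ := by
  have hexists : (∃ l, l.Sublist (word π) ∧ IsForbidden l) ↔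
      ∃ w : Fin 4 → ℕ, (List.ofFn w).Sublist (word π) ∧ IsForbidden (List.ofFn w) := by
    refine ⟨fun ⟨l, hl, h⟩ => ?_, fun ⟨w, hw, h⟩ => ⟨_, hw, h⟩⟩
    obtain ⟨a, b, c, d, rfl, -⟩ := isForbidden_iff.1 h
    exact ⟨![a, b, c, d], by simpa using hl, by simpa using h⟩
  have hpattern (w : Fin 4 → ℕ) : IsForbidden (List.ofFn w) ↔
      ∃ σ ∈ ({![1, 2, 0, 3], ![1, 3, 2, 0], ![2, 3, 0, 1]} : Set (Fin 4 → Fin 4)),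
        ∀ i j, σ i < σ j ↔ w i < w j := by
    simp only [IsForbidden, List.ofFn_succ, Fin.isValue, Fin.succ_zero_eq_one, Fin.succ_one_eq_two,
      Fin.reduceSucc, List.ofFn_zero, Nat.succ_eq_add_one, Nat.reduceAdd, Set.mem_insert_iff,
      Set.mem_singleton_iff, Fin.forall_fin_succ, IsEmpty.forall_iff, and_true, lt_self_iff_false,
      true_and, exists_eq_or_imp, Matrix.cons_val_zero, Matrix.cons_val_one, Fin.reduceLT,
      true_iff, Matrix.cons_val, not_lt_zero, false_iff, not_lt, Fin.lt_one_iff, Fin.reduceEq,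
      zero_lt_one, ↓existsAndEq]
    omega
  simp only [Avoids, hexists, hpattern, containsPattern_iff_exists_ofFn_sublist]
  grind

/-- Putting the letter `a` in front of `p` creates a forbidden pattern. -/
def Blocked (p : List ℕ) (a : ℕ) : Prop :=
  ∃ l : List ℕ, l.Sublist p ∧ IsForbidden (a :: l.map (shiftAbove a))

theorem avoids_prepend {a : ℕ} {p : List ℕ} : Avoids (prepend a p) ↔ Avoids p ∧ ¬ Blocked p a := by
  simp only [Avoids, Blocked, prepend, exists_sublist_cons, exists_sublist_map, not_or,
    isForbidden_map (shiftAbove_strictMono a)]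

theorem not_blocked_zero (p : List ℕ) : ¬ Blocked p 0 := by
  rintro ⟨l, -, h⟩
  obtain ⟨b, -, hb⟩ := h.exists_lt
  exact absurd hb b.not_lt_zero

theorem IsPermWord.not_blocked_length {p : List ℕ} (hp : IsPermWord p) :
    ¬ Blocked p p.length := by
  rintro ⟨l, hl, h⟩
  obtain ⟨b, hb, hlt⟩ := h.exists_gt
  obtain ⟨v, hv, rfl⟩ := List.mem_map.1 hb
  have := (hp v).1 (hl.subset hv)
  grind [shiftAbove]

open Classical in
/-- The letters that can be put in front of `p` without creating a forbidden pattern. -/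
noncomputable def activeSites (p : List ℕ) : Finset ℕ :=
  (Finset.range (p.length + 1)).filter fun a => ¬ Blocked p a

theorem mem_activeSites {p : List ℕ} {a : ℕ} :
    a ∈ activeSites p ↔ a ≤ p.length ∧ ¬ Blocked p a := by
  simp [activeSites]

theorem zero_mem_activeSites (p : List ℕ) : 0 ∈ activeSites p :=
  mem_activeSites.2 ⟨Nat.zero_le _, not_blocked_zero p⟩

theorem IsPermWord.length_mem_activeSites {p : List ℕ} (hp : IsPermWord p) :
    p.length ∈ activeSites p :=
  mem_activeSites.2 ⟨le_rfl, hp.not_blocked_length⟩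

theorem avoiderCount_eq_nodeCount (n : ℕ) :
    avoiderCount ({![1, 2, 0, 3], ![1, 3, 2, 0], ![2, 3, 0, 1]} : Set (Fin 4 → Fin 4)) n =
      nodeCount (prependChildren activeSites) n [] := by
  simp only [avoiderCount, ← avoids_word_iff]
  refine card_perm_eq_nodeCount avoids_nil (fun a p h => (avoids_prepend.1 h).1) ?_ n
  intro p hp a
  simp [mem_activeSites, avoids_prepend, hp]

/-- For `s ≤ a`, the letters `c`, `d` of a word, in this order, complete the prefix `s, a` created
by prepending `a` and then `s` to a forbidden pattern. -/
def CompletesPattern (a s c d : ℕ) : Prop :=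
  (c < s ∧ a ≤ d) ∨ (d < s ∧ s ≤ c ∧ c < a) ∨ (c < d ∧ d < s)

/-- For `s ≤ a`, prepending the letter `a` to `p` blocks the site `s`. -/
def Kills (p : List ℕ) (a s : ℕ) : Prop := ∃ c d, [c, d].Sublist p ∧ CompletesPattern a s c d

theorem isForbidden_cons_shiftAbove_iff {a s c d : ℕ} (hsa : s ≤ a) :
    IsForbidden [s, shiftAbove s a, shiftAbove s (shiftAbove a c),
      shiftAbove s (shiftAbove a d)] ↔ CompletesPattern a s c d := by
  simp only [IsForbidden, CompletesPattern, shiftAbove]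
  grind

theorem kills_iff_exists_isForbidden {p : List ℕ} {a s : ℕ} (hsa : s ≤ a) :
    Kills p a s ↔ ∃ l : List ℕ, l.Sublist p ∧
      IsForbidden (s :: shiftAbove s a :: (l.map (shiftAbove a)).map (shiftAbove s)) := by
  constructor
  · rintro ⟨c, d, hcd, h⟩
    exact ⟨_, hcd, (isForbidden_cons_shiftAbove_iff hsa).2 h⟩
  · rintro ⟨l, hl, h⟩
    obtain ⟨c, d, rfl⟩ : ∃ c d, l = [c, d] := by
      obtain ⟨_, _, _, _, heq, -⟩ := isForbidden_iff.1 h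
      exact List.length_eq_two.1 (by simpa using congrArg List.length heq)
    exact ⟨c, d, hl, (isForbidden_cons_shiftAbove_iff hsa).1 h⟩

theorem not_kills_zero (p : List ℕ) (a : ℕ) : ¬ Kills p a 0 := by
  rintro ⟨c, d, -, h⟩
  simp [CompletesPattern] at h

theorem kills_prepend {p : List ℕ} {x a s : ℕ} :
    Kills (prepend x p) a s ↔
      (∃ c d, [c, d].Sublist p ∧ CompletesPattern a s (shiftAbove x c) (shiftAbove x d)) ∨
        ∃ d ∈ p, CompletesPattern a s x (shiftAbove x d) := by
  simp only [Kills, prepend, List.cons_sublist_cons', List.singleton_sublist, or_and_right,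
    exists_or, exists_pair_sublist_map]
  simp

theorem kills_prepend_of_le {p : List ℕ} {x a s : ℕ} (hsa : s ≤ a) (hax : a ≤ x) :
    Kills (prepend x p) a s ↔ Kills p a s := by
  have hshift (c d) : CompletesPattern a s (shiftAbove x c) (shiftAbove x d) ↔
      CompletesPattern a s c d := by
    simp only [CompletesPattern, shiftAbove]
    grind
  have hfirst (d) : ¬ CompletesPattern a s x (shiftAbove x d) := by
    simp only [CompletesPattern, shiftAbove]
    grind
  rw [kills_prepend, Kills]
  simp only [hshift, hfirst, and_false, exists_false, or_false]

theorem IsPermWord.kills_prepend_length_succ {p : List ℕ} {x : ℕ} (hp : IsPermWord p)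
    (hx : x ≤ p.length) :
    Kills (prepend x p) (p.length + 1) (x + 1) ↔ Kills p p.length x := by
  have hshift (c d) : CompletesPattern (p.length + 1) (x + 1) (shiftAbove x c) (shiftAbove x d) ↔
      CompletesPattern p.length x c d := by
    simp only [CompletesPattern, shiftAbove]
    grind
  have hfirst : ¬ ∃ d ∈ p, CompletesPattern (p.length + 1) (x + 1) x (shiftAbove x d) := by
    rintro ⟨d, hd, h⟩
    have := (hp d).1 hd
    simp only [CompletesPattern, shiftAbove] at h
    grind
  rw [kills_prepend, Kills]
  simp only [hshift, hfirst, or_false]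

theorem blocked_prepend {p : List ℕ} {x s : ℕ} :
    Blocked (prepend x p) s ↔
      (∃ l : List ℕ, l.Sublist p ∧ IsForbidden (s :: (l.map (shiftAbove x)).map (shiftAbove s))) ∨
        ∃ l : List ℕ, l.Sublist p ∧
          IsForbidden (s :: shiftAbove s x :: (l.map (shiftAbove x)).map (shiftAbove s)) := by
  simp only [Blocked, prepend, exists_sublist_cons, exists_sublist_map, List.map_cons]

theorem blocked_prepend_succ {p : List ℕ} {x t : ℕ} (hxt : x ≤ t) :
    Blocked (prepend x p) (t + 1) ↔ Blocked p t := by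
  have hdescent (l) : ¬ IsForbidden ((t + 1) :: shiftAbove (t + 1) x :: l) := fun h => by
    have := h.head_lt
    grind [shiftAbove]
  have hshift (l : List ℕ) : (t + 1) :: (l.map (shiftAbove x)).map (shiftAbove (t + 1)) =
      (t :: l.map (shiftAbove t)).map (shiftAbove x) := by
    have ht : shiftAbove x t = t + 1 := by grind [shiftAbove]
    simp [shiftAbove_succ_shiftAbove hxt, ht, Function.comp_def]
  rw [blocked_prepend, Blocked]
  simp only [hdescent, and_false, exists_false, or_false, hshift,
    isForbidden_map (shiftAbove_strictMono x)]

theorem blocked_prepend_of_le {p : List ℕ} {x s : ℕ} (hsx : s ≤ x) :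
    Blocked (prepend x p) s ↔ Blocked p s ∨ Kills p x s := by
  have hshift (l : List ℕ) : s :: (l.map (shiftAbove x)).map (shiftAbove s) =
      (s :: l.map (shiftAbove s)).map (shiftAbove (x + 1)) := by
    have hs : shiftAbove (x + 1) s = s := by grind [shiftAbove]
    simp [shiftAbove_succ_shiftAbove hsx, hs, Function.comp_def]
  rw [blocked_prepend, ← kills_iff_exists_isForbidden hsx]
  simp only [hshift, isForbidden_map (shiftAbove_strictMono (x + 1)), Blocked]

theorem succ_mem_activeSites_prepend {p : List ℕ} {x t : ℕ} (hxt : x ≤ t) :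
    t + 1 ∈ activeSites (prepend x p) ↔ t ∈ activeSites p := by
  simp [mem_activeSites, blocked_prepend_succ hxt]

theorem mem_activeSites_prepend_of_le {p : List ℕ} {x s : ℕ} (hsx : s ≤ x) (hx : x ≤ p.length) :
    s ∈ activeSites (prepend x p) ↔ s ∈ activeSites p ∧ ¬ Kills p x s := by
  rw [mem_activeSites, mem_activeSites, blocked_prepend_of_le hsx, length_prepend, not_or]
  grind

/-! ### Surviving sites -/

/-- The nonzero active site `s ≤ a` of `p` is still active after the active site `a` has been
used; the sites above `a` always stay active, shifted by one. -/
structure Survives (p : List ℕ) (a s : ℕ) : Prop where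
  pos : 0 < s
  le : s ≤ a
  used_mem : a ∈ activeSites p
  mem : s ∈ activeSites p
  not_kills : ¬ Kills p a s

section Prepend

variable {p : List ℕ} {x a s : ℕ}

theorem le_length_of_mem_activeSites (hx : x ∈ activeSites p) : x ≤ p.length :=
  (mem_activeSites.1 hx).1

theorem mem_activeSites_prepend (hx : x ∈ activeSites p) :
    s ∈ activeSites (prepend x p) ↔
      s = 0 ∨ (∃ t ∈ activeSites p, x ≤ t ∧ s = t + 1) ∨ Survives p x s := by
  rcases le_or_gt s x with hsx | hxs
  · rw [mem_activeSites_prepend_of_le hsx (le_length_of_mem_activeSites hx)]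
    constructor
    · rintro ⟨hs, hkills⟩
      rcases s.eq_zero_or_pos with h0 | hpos
      · exact Or.inl h0
      · exact Or.inr (Or.inr ⟨hpos, hsx, hx, hs, hkills⟩)
    · rintro (rfl | ⟨t, -, hxt, rfl⟩ | hs)
      · exact ⟨zero_mem_activeSites p, not_kills_zero p x⟩
      · omega
      · exact ⟨hs.mem, hs.not_kills⟩
  · obtain ⟨t, rfl⟩ := Nat.exists_eq_add_one_of_ne_zero (Nat.ne_zero_of_lt hxs)
    rw [succ_mem_activeSites_prepend (Nat.le_of_lt_succ hxs)]
    constructor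
    · exact fun ht => Or.inr (Or.inl ⟨t, ht, Nat.le_of_lt_succ hxs, rfl⟩)
    · rintro (h0 | ⟨t', ht', -, heq⟩ | hs)
      · omega
      · rwa [Nat.succ_injective heq]
      · exact absurd hs.le hxs.not_ge

theorem card_activeSites_prepend (hx : x ∈ activeSites p) :
    (activeSites (prepend x p)).card =
      rankAbove (activeSites p) x + 2 + {s | Survives p x s}.ncard := by
  classical
  let survivors := (activeSites p).filter (Survives p x)
  let shifted := (insert x ((activeSites p).filter (x < ·))).map (addRightEmbedding 1)
  have hsurvivors (s) : s ∈ survivors ↔ Survives p x s := by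
    simpa [survivors] using Survives.mem
  have hshifted (s) : s ∈ shifted ↔ ∃ t ∈ activeSites p, x ≤ t ∧ s = t + 1 := by
    simp only [shifted, Finset.mem_map, Finset.mem_insert, Finset.mem_filter,
      addRightEmbedding_apply]
    grind
  have hsites : activeSites (prepend x p) = insert 0 (shifted ∪ survivors) := by
    ext s
    simp [mem_activeSites_prepend hx, hshifted, hsurvivors]
  have hdisjoint : Disjoint shifted survivors := by
    rw [Finset.disjoint_left]
    intro s hs hs'
    obtain ⟨t, -, hxt, rfl⟩ := (hshifted s).1 hs
    exact absurd ((hsurvivors _).1 hs').le (by omega)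
  have hzero : 0 ∉ shifted ∪ survivors := by
    simp only [Finset.mem_union, hshifted, hsurvivors, not_or]
    exact ⟨by omega, fun h => h.pos.false⟩
  have hcard : shifted.card = rankAbove (activeSites p) x + 1 := by
    simp [shifted, rankAbove]
  have hncard : {s | Survives p x s}.ncard = survivors.card := by
    rw [← Set.ncard_coe_finset]
    simp only [← hsurvivors, Finset.setOfPred_mem]
  rw [hsites, Finset.card_insert_of_notMem hzero, Finset.card_union_of_disjoint hdisjoint, hcard,
    hncard]
  ring

theorem card_activeSites_prepend_of_not_survives (hx : x ∈ activeSites p)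
    (h : ∀ s, ¬ Survives p x s) :
    (activeSites (prepend x p)).card = rankAbove (activeSites p) x + 2 := by
  simp [card_activeSites_prepend hx, h]

theorem card_activeSites_prepend_of_survives_iff (h : ∀ t, Survives p x t ↔ t = s) :
    (activeSites (prepend x p)).card = rankAbove (activeSites p) x + 3 := by
  simp [card_activeSites_prepend ((h s).2 rfl).used_mem, h]

theorem card_activeSites_prepend_zero (p : List ℕ) :
    (activeSites (prepend 0 p)).card = (activeSites p).card + 1 := by
  rw [card_activeSites_prepend_of_not_survives (zero_mem_activeSites p)
      fun s hs => (hs.pos.trans_le hs.le).false,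
    ← rankAbove_add_one_of_forall_le (zero_mem_activeSites p) fun s _ => s.zero_le]

theorem survives_prepend_of_le (hax : a ≤ x) (hx : x ≤ p.length) :
    Survives (prepend x p) a s ↔ Survives p a s ∧ ¬ Kills p x a ∧ ¬ Kills p x s := by
  constructor
  · rintro ⟨hpos, hsa, ha, hs, hkills⟩
    rw [mem_activeSites_prepend_of_le hax hx] at ha
    rw [mem_activeSites_prepend_of_le (hsa.trans hax) hx] at hs
    rw [kills_prepend_of_le hsa hax] at hkills
    exact ⟨⟨hpos, hsa, ha.1, hs.1, hkills⟩, ha.2, hs.2⟩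
  · rintro ⟨⟨hpos, hsa, ha, hs, hkills⟩, hxa, hxs⟩
    refine ⟨hpos, hsa, ?_, ?_, ?_⟩
    · exact (mem_activeSites_prepend_of_le hax hx).2 ⟨ha, hxa⟩
    · exact (mem_activeSites_prepend_of_le (hsa.trans hax) hx).2 ⟨hs, hxs⟩
    · rwa [kills_prepend_of_le hsa hax]

/- The first letter `x` forms a forbidden pattern with `s`, `a` and a later letter `0` if `s ≤ x`,
`x + 1` if `x + 1 < s`, and `p.length` if `a ≤ p.length`. -/
theorem eq_of_not_kills_prepend (hp : IsPermWord p) (hxa : x < a) (ha : a ≤ p.length + 1)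
    (hpos : 0 < s) (hsa : s ≤ a) (h : ¬ Kills (prepend x p) a s) :
    a = p.length + 1 ∧ s = x + 1 := by
  have hnot (d) (hd : d ∈ p) : ¬ CompletesPattern a s x (shiftAbove x d) := fun hc =>
    h (kills_prepend.2 (Or.inr ⟨d, hd, hc⟩))
  simp only [hp _, CompletesPattern, shiftAbove] at hnot
  have hzero := hnot 0
  have hnext := hnot x
  have hlast := hnot (p.length - 1)
  grind

theorem survives_prepend_of_lt (hp : IsPermWord p) (hx : x ∈ activeSites p) (hxa : x < a) :
    Survives (prepend x p) a s ↔
      a = p.length + 1 ∧ s = x + 1 ∧ (x = 0 ∨ Survives p p.length x) := by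
  have hxlen := le_length_of_mem_activeSites hx
  constructor
  · rintro ⟨hpos, hsa, ha, hs, hkills⟩
    have halen : a ≤ p.length + 1 := by simpa using le_length_of_mem_activeSites ha
    obtain ⟨rfl, rfl⟩ := eq_of_not_kills_prepend hp hxa halen hpos hsa hkills
    rw [hp.kills_prepend_length_succ hxlen] at hkills
    refine ⟨rfl, rfl, x.eq_zero_or_pos.imp_right fun hxpos => ?_⟩
    exact ⟨hxpos, hxlen, hp.length_mem_activeSites, hx, hkills⟩
  · rintro ⟨rfl, rfl, hsurvives⟩
    refine ⟨x.succ_pos, by omega, ?_, (succ_mem_activeSites_prepend le_rfl).2 hx, ?_⟩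
    · simpa using (isPermWord_prepend hp hxlen).length_mem_activeSites
    · rw [hp.kills_prepend_length_succ hxlen]
      rcases hsurvives with rfl | hsurvives
      · exact not_kills_zero p _
      · exact hsurvives.not_kills

theorem survives_prepend (hp : IsPermWord p) (hx : x ∈ activeSites p) :
    Survives (prepend x p) a s ↔
      (a ≤ x ∧ Survives p a s ∧ ¬ Kills p x a ∧ ¬ Kills p x s) ∨
        (a = p.length + 1 ∧ s = x + 1 ∧ (x = 0 ∨ Survives p p.length x)) := by
  have hxlen := le_length_of_mem_activeSites hx
  rcases le_or_gt a x with hax | hxa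
  · rw [survives_prepend_of_le hax hxlen]
    grind
  · rw [survives_prepend_of_lt hp hx hxa]
    grind

end Prepend

/-! ### Decreasing words and words with at most one survival -/

/-- The decreasing word `n - 1, …, 1, 0`. -/
def descending : ℕ → List ℕ
  | 0 => []
  | n + 1 => n :: descending n

/-- No site of `p` survives the use of any active site at or above it. -/
structure NoSurvivor (p : List ℕ) : Prop where
  isPermWord : IsPermWord p
  length_pos : 0 < p.length
  not_survives : ∀ a s, ¬ Survives p a s

/-- The only survival in `p` is that of its least nonzero active site `i` when the top site
`p.length` is used. The ascent shows that it disappears once another nonzero site is used. -/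
structure TopSurvivor (p : List ℕ) (i : ℕ) : Prop where
  isPermWord : IsPermWord p
  lt_length : i < p.length
  survives_iff : ∀ a s, Survives p a s ↔ a = p.length ∧ s = i
  eq_zero_of_lt : ∀ s ∈ activeSites p, s < i → s = 0
  exists_ascent : ∃ c d, [c, d].Sublist p ∧ c < d

/-- The only survival in `p` is that of its least nonzero active site `m` when `m` itself is used.
The descent shows that it disappears once another nonzero site is used. -/
structure DiagSurvivor (p : List ℕ) (m : ℕ) : Prop where
  isPermWord : IsPermWord p
  lt_length : m < p.length
  survives_iff : ∀ a s, Survives p a s ↔ a = m ∧ s = m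
  eq_zero_of_lt : ∀ s ∈ activeSites p, s < m → s = 0
  exists_descent : ∃ d, [m, d].Sublist p ∧ d < m

section Descending

variable {n a s : ℕ}

@[simp]
theorem length_descending (n : ℕ) : (descending n).length = n := by
  induction n with
  | zero => rfl
  | succ n ih => simp [descending, ih]

theorem mem_descending {v : ℕ} : v ∈ descending n ↔ v < n := by
  induction n with
  | zero => simp [descending]
  | succ n ih => simp [descending, ih, le_iff_eq_or_lt]

theorem isPermWord_descending (n : ℕ) : IsPermWord (descending n) := by
  intro v
  rw [mem_descending, length_descending]

theorem prepend_descending (n : ℕ) : prepend n (descending n) = descending (n + 1) := by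
  have hmap : (descending n).map (shiftAbove n) = descending n :=
    (List.map_congr_left fun v hv => if_pos (mem_descending.1 hv)).trans (List.map_id _)
  rw [prepend, hmap, descending]

theorem pair_sublist_descending {c d : ℕ} : [c, d].Sublist (descending n) ↔ d < c ∧ c < n := by
  induction n with
  | zero => simp [descending]
  | succ n ih =>
    simp only [descending, List.cons_sublist_cons', ih, List.singleton_sublist, mem_descending]
    omega

theorem kills_descending (hsa : s ≤ a) : Kills (descending n) a s ↔ 0 < s ∧ s < a ∧ s < n := by
  simp only [Kills, pair_sublist_descending, CompletesPattern]
  constructor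
  · rintro ⟨c, d, hcd, h⟩
    omega
  · exact fun h => ⟨s, 0, by omega, by omega⟩

theorem mem_activeSites_descending_succ :
    s ∈ activeSites (descending (n + 1)) ↔ s = 0 ∨ s = n ∨ s = n + 1 := by
  have htop : n ∈ activeSites (descending n) := by
    simpa using (isPermWord_descending n).length_mem_activeSites
  rw [← prepend_descending, mem_activeSites_prepend htop]
  constructor
  · rintro (rfl | ⟨t, ht, hnt, rfl⟩ | hs)
    · exact Or.inl rfl
    · have := le_length_of_mem_activeSites ht
      rw [length_descending] at this
      omega
    · have := hs.not_kills
      rw [kills_descending hs.le] at this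
      have := hs.pos
      have := hs.le
      omega
  · rintro (rfl | rfl | rfl)
    · exact Or.inl rfl
    · rcases s.eq_zero_or_pos with h0 | hpos
      · exact Or.inl h0
      · refine Or.inr (Or.inr ⟨hpos, le_rfl, htop, htop, ?_⟩)
        simp [kills_descending le_rfl]
    · exact Or.inr (Or.inl ⟨n, htop, le_rfl, rfl⟩)

theorem survives_descending_succ :
    Survives (descending (n + 1)) a s ↔ a = s ∧ 0 < s ∧ (s = n ∨ s = n + 1) := by
  constructor
  · rintro ⟨hpos, hsa, ha, hs, hkills⟩
    rw [mem_activeSites_descending_succ] at ha hs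
    rw [kills_descending hsa] at hkills
    omega
  · rintro ⟨rfl, hpos, ha⟩
    have hmem : a ∈ activeSites (descending (n + 1)) :=
      mem_activeSites_descending_succ.2 (Or.inr ha)
    exact ⟨hpos, le_rfl, hmem, hmem, by simp [kills_descending le_rfl]⟩

theorem activeSites_descending_succ (n : ℕ) :
    activeSites (descending (n + 1)) = {0, n, n + 1} := by
  ext s
  simp [mem_activeSites_descending_succ]

theorem diagSurvivor_prepend_descending (n : ℕ) :
    DiagSurvivor (prepend (n + 1) (descending (n + 2))) (n + 1) := by
  have hp := isPermWord_descending (n + 2)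
  have hx : n + 1 ∈ activeSites (descending (n + 2)) :=
    mem_activeSites_descending_succ.2 (by omega)
  refine ⟨isPermWord_prepend hp (le_length_of_mem_activeSites hx), by simp, fun a s => ?_,
    fun s hs hlt => ?_, 0, ?_, n.succ_pos⟩
  · rw [survives_prepend hp hx, survives_descending_succ, survives_descending_succ,
      length_descending]
    constructor
    · omega
    · rintro ⟨rfl, rfl⟩
      simp [kills_descending le_rfl]
  · rw [mem_activeSites_prepend hx, survives_descending_succ] at hs
    omega
  · refine List.Sublist.cons_cons _ (List.singleton_sublist.2 (List.mem_map.2 ⟨0, ?_, rfl⟩))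
    simp [mem_descending]

end Descending

theorem topSurvivor_prepend_zero {p : List ℕ} (hp : IsPermWord p) (hpos : 0 < p.length) :
    TopSurvivor (prepend 0 p) 1 := by
  have hx := zero_mem_activeSites p
  refine ⟨isPermWord_prepend hp (Nat.zero_le _), by simpa using hpos, fun a s => ?_,
    by omega, 0, 1, ?_, one_pos⟩
  · rw [survives_prepend hp hx, length_prepend]
    grind [Survives]
  · exact List.Sublist.cons_cons _
      (List.singleton_sublist.2 (List.mem_map.2 ⟨0, (hp 0).2 hpos, rfl⟩))

namespace NoSurvivor

variable {p : List ℕ} {x : ℕ}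

theorem prepend_of_ne_zero (h : NoSurvivor p) (hx : x ∈ activeSites p) (hx0 : x ≠ 0) :
    NoSurvivor (prepend x p) :=
  ⟨isPermWord_prepend h.isPermWord (le_length_of_mem_activeSites hx), by simp, fun a s => by
    simp [survives_prepend h.isPermWord hx, h.not_survives, hx0]⟩

end NoSurvivor

namespace TopSurvivor

variable {p : List ℕ} {i x : ℕ}

theorem survives (h : TopSurvivor p i) : Survives p p.length i := (h.survives_iff _ _).2 ⟨rfl, rfl⟩

theorem prepend_self (h : TopSurvivor p i) : TopSurvivor (prepend i p) (i + 1) := by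
  have hx := h.survives.mem
  have hlt := h.lt_length
  obtain ⟨c, d, hcd, hascent⟩ := h.exists_ascent
  refine ⟨isPermWord_prepend h.isPermWord hlt.le, by simpa using hlt, fun a s => ?_,
    fun s hs hsi => ?_, _, _, (hcd.map _).cons _, shiftAbove_strictMono i hascent⟩
  · rw [survives_prepend h.isPermWord hx, h.survives_iff, h.survives_iff, length_prepend]
    grind
  · rw [mem_activeSites_prepend hx, h.survives_iff] at hs
    omega

theorem prepend_of_ne (h : TopSurvivor p i) (hx : x ∈ activeSites p) (hx0 : x ≠ 0) (hxi : x ≠ i) :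
    NoSurvivor (prepend x p) := by
  refine ⟨isPermWord_prepend h.isPermWord (le_length_of_mem_activeSites hx), by simp,
    fun a s hs => ?_⟩
  rw [survives_prepend h.isPermWord hx, h.survives_iff, h.survives_iff] at hs
  obtain ⟨c, d, hcd, hascent⟩ := h.exists_ascent
  have hd : d < p.length := (h.isPermWord d).1 (hcd.subset (by simp))
  rcases hs with ⟨hax, ⟨rfl, rfl⟩, hkills, -⟩ | hs
  · exact hkills ⟨c, d, hcd, Or.inr (Or.inr ⟨hascent, hd⟩)⟩
  · tauto

end TopSurvivor

namespace DiagSurvivor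

variable {p : List ℕ} {m x : ℕ}

theorem survives (h : DiagSurvivor p m) : Survives p m m := (h.survives_iff _ _).2 ⟨rfl, rfl⟩

theorem prepend_self (h : DiagSurvivor p m) : DiagSurvivor (prepend m p) m := by
  have hx := h.survives.mem
  have hlt := h.lt_length
  obtain ⟨d, hd, hdm⟩ := h.exists_descent
  refine ⟨isPermWord_prepend h.isPermWord hlt.le, by simpa using hlt.le, fun a s => ?_,
    fun s hs hsm => ?_, d, ?_, hdm⟩
  · rw [survives_prepend h.isPermWord hx, h.survives_iff, h.survives_iff]
    grind [h.survives.not_kills]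
  · rw [mem_activeSites_prepend hx, h.survives_iff] at hs
    omega
  · exact List.Sublist.cons_cons _ (List.singleton_sublist.2
      (List.mem_map.2 ⟨d, hd.subset (by simp), if_pos hdm⟩))

theorem prepend_of_ne (h : DiagSurvivor p m) (hx : x ∈ activeSites p) (hx0 : x ≠ 0) (hxm : x ≠ m) :
    NoSurvivor (prepend x p) := by
  refine ⟨isPermWord_prepend h.isPermWord (le_length_of_mem_activeSites hx), by simp,
    fun a s hs => ?_⟩
  rw [survives_prepend h.isPermWord hx, h.survives_iff, h.survives_iff] at hs
  have hlt := h.lt_length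
  obtain ⟨d, hd, hdm⟩ := h.exists_descent
  rcases hs with ⟨hax, ⟨rfl, rfl⟩, hkills, -⟩ | hs
  · exact hkills ⟨_, d, hd, Or.inr (Or.inl ⟨hdm, le_rfl, by omega⟩)⟩
  · omega

end DiagSurvivor

/-! ### The generating tree of labels -/

/-- Labels of the generating tree. `decreasing n` is the word `descending n`; the other three
record which survivals a word has and, in `k`, its number of active sites up to a constant. -/
inductive Label
  | decreasing (n : ℕ)
  | noSurvivor (k : ℕ)
  | topSurvivor (k : ℕ)
  | diagSurvivor (k : ℕ)

/-- The succession rule on labels. -/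
def Label.children : Label → Multiset Label
  | decreasing 0 => {decreasing 1}
  | decreasing 1 => {topSurvivor 0, decreasing 2}
  | decreasing (n + 2) => {topSurvivor 1, diagSurvivor 0, decreasing (n + 3)}
  | noSurvivor k => topSurvivor k ::ₘ (Multiset.range (k + 1)).map noSurvivor
  | topSurvivor k =>
    topSurvivor (k + 1) ::ₘ topSurvivor k ::ₘ
      (Multiset.range (k + 1)).map fun r => noSurvivor (max 1 r)
  | diagSurvivor k =>
    topSurvivor (k + 2) ::ₘ diagSurvivor (k + 1) ::ₘ (Multiset.range (k + 2)).map noSurvivor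

/-- `HasLabel p ℓ` says that the word `p` carries the label `ℓ`. The numbers of active sites are
offset so that the labels of every kind start at `k = 0`. -/
inductive HasLabel : List ℕ → Label → Prop
  | decreasing (n : ℕ) : HasLabel (descending n) (.decreasing n)
  | noSurvivor {p : List ℕ} {k : ℕ} (h : NoSurvivor p) (hcard : (activeSites p).card = k + 2) :
    HasLabel p (.noSurvivor k)
  | topSurvivor {p : List ℕ} {i k : ℕ} (h : TopSurvivor p i)
    (hcard : (activeSites p).card = k + 3) : HasLabel p (.topSurvivor k)
  | diagSurvivor {p : List ℕ} {m k : ℕ} (h : DiagSurvivor p m)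
    (hcard : (activeSites p).card = k + 4) : HasLabel p (.diagSurvivor k)

section HasLabel

variable {p : List ℕ} {i k : ℕ} {ℓ₀ ℓ₁ : Label} {g : ℕ → Label}

theorem card_activeSites_erase_zero (p : List ℕ) :
    ((activeSites p).erase 0).card + 1 = (activeSites p).card :=
  Finset.card_erase_add_one (zero_mem_activeSites p)

theorem rankAbove_add_two_of_forall_lt_eq_zero (hi : i ∈ activeSites p) (hpos : 0 < i)
    (h : ∀ s ∈ activeSites p, s < i → s = 0) :
    rankAbove (activeSites p) i + 2 = (activeSites p).card := by
  rw [← card_activeSites_erase_zero, ← rankAbove_erase i.zero_le,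
    ← rankAbove_add_one_of_forall_le (Finset.mem_erase.2 ⟨hpos.ne', hi⟩)]
  intro s hs
  have := h s (Finset.mem_of_mem_erase hs)
  have := Finset.ne_of_mem_erase hs
  omega

theorem rel_prependChildren_cons (hcard : (activeSites p).card = k + 1)
    (hzero : HasLabel (prepend 0 p) ℓ₀)
    (hother : ∀ x ∈ activeSites p, x ≠ 0 →
      HasLabel (prepend x p) (g (rankAbove (activeSites p) x))) :
    Multiset.Rel HasLabel (prependChildren activeSites p)
      (ℓ₀ ::ₘ (Multiset.range k).map g) := by
  refine rel_map_cons_of_erase (zero_mem_activeSites p) hzero ?_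
  have hk : ((activeSites p).erase 0).card = k := by
    have := card_activeSites_erase_zero p
    omega
  rw [← hk]
  refine rel_map_of_rankAbove fun x hx => ?_
  obtain ⟨hx0, hx⟩ := Finset.mem_erase.1 hx
  rw [rankAbove_erase x.zero_le]
  exact hother x hx hx0

theorem rel_prependChildren_cons_cons (hi : i ∈ activeSites p) (hpos : 0 < i)
    (hmin : ∀ s ∈ activeSites p, s < i → s = 0) (hcard : (activeSites p).card = k + 2)
    (hzero : HasLabel (prepend 0 p) ℓ₀) (hleast : HasLabel (prepend i p) ℓ₁)
    (hother : ∀ x ∈ activeSites p, x ≠ 0 → x ≠ i →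
      HasLabel (prepend x p) (g (rankAbove (activeSites p) x))) :
    Multiset.Rel HasLabel (prependChildren activeSites p)
      (ℓ₀ ::ₘ ℓ₁ ::ₘ (Multiset.range k).map g) := by
  have hirank : rankAbove (activeSites p) i = k := by
    have := rankAbove_add_two_of_forall_lt_eq_zero hi hpos hmin
    omega
  have hrange : ℓ₁ ::ₘ (Multiset.range k).map g =
      (Multiset.range (k + 1)).map (Function.update g k ℓ₁) := by
    rw [Multiset.range_succ, Multiset.map_cons, Function.update_self]
    congr 1
    refine Multiset.map_congr rfl fun r hr => (Function.update_of_ne ?_ _ _).symm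
    exact (Multiset.mem_range.1 hr).ne
  rw [hrange]
  refine rel_prependChildren_cons hcard hzero fun x hx hx0 => ?_
  by_cases hxi : x = i
  · rwa [hxi, hirank, Function.update_self]
  · rw [Function.update_of_ne (by rwa [← hirank, Ne, rankAbove_inj hx hi])]
    exact hother x hx hx0 hxi

theorem hasLabel_prepend_zero (hp : IsPermWord p) (hpos : 0 < p.length)
    (hcard : (activeSites p).card = k + 2) : HasLabel (prepend 0 p) (.topSurvivor k) :=
  .topSurvivor (topSurvivor_prepend_zero hp hpos) (by rw [card_activeSites_prepend_zero, hcard])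

theorem hasLabel_prepend_descending (n : ℕ) :
    HasLabel (prepend n (descending n)) (.decreasing (n + 1)) :=
  prepend_descending n ▸ .decreasing (n + 1)

theorem rel_prependChildren_descending_zero :
    Multiset.Rel HasLabel (prependChildren activeSites (descending 0))
      (Label.children (.decreasing 0)) := by
  have hsites : activeSites (descending 0) = {0} := by
    ext s
    have := @le_length_of_mem_activeSites [] s
    have := zero_mem_activeSites []
    grind [descending]
  refine rel_prependChildren_cons (g := .decreasing) (by rw [hsites]; rfl)
    (hasLabel_prepend_descending 0) fun x hx hx0 => ?_
  exact absurd (by simpa [hsites] using hx) hx0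

theorem rel_prependChildren_descending_one :
    Multiset.Rel HasLabel (prependChildren activeSites (descending 1))
      (Label.children (.decreasing 1)) := by
  have hsites : activeSites (descending 1) = {0, 1} := by simp [activeSites_descending_succ]
  have hcard : (activeSites (descending 1)).card = 2 := by rw [hsites]; rfl
  refine rel_prependChildren_cons (g := fun _ => .decreasing 2) hcard
    (hasLabel_prepend_zero (isPermWord_descending 1) one_pos hcard) fun x hx hx0 => ?_
  obtain rfl : x = 1 := by simpa [hsites, hx0] using hx
  exact hasLabel_prepend_descending 1

theorem rel_prependChildren_descending_add_two (n : ℕ) :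
    Multiset.Rel HasLabel (prependChildren activeSites (descending (n + 2)))
      (Label.children (.decreasing (n + 2))) := by
  have hmem {s} : s ∈ activeSites (descending (n + 2)) ↔ s = 0 ∨ s = n + 1 ∨ s = n + 2 :=
    mem_activeSites_descending_succ
  have hcard : (activeSites (descending (n + 2))).card = 3 := by
    simp [activeSites_descending_succ]
  have hi : n + 1 ∈ activeSites (descending (n + 2)) := hmem.2 (by omega)
  have hmin : ∀ s ∈ activeSites (descending (n + 2)), s < n + 1 → s = 0 := by
    intro s hs hlt
    rw [hmem] at hs
    omega
  refine rel_prependChildren_cons_cons (g := fun _ => .decreasing (n + 3)) hi n.succ_pos hmin hcard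
    (hasLabel_prepend_zero (isPermWord_descending _) (by simp) hcard)
    (.diagSurvivor (diagSurvivor_prepend_descending n) ?_) fun x hx hx0 hxi => ?_
  · rw [card_activeSites_prepend_of_survives_iff (s := n + 1)]
    · have := rankAbove_add_two_of_forall_lt_eq_zero hi n.succ_pos hmin
      omega
    · intro t
      rw [survives_descending_succ]
      omega
  · obtain rfl : x = n + 2 := by
      rw [hmem] at hx
      omega
    exact hasLabel_prepend_descending (n + 2)

theorem NoSurvivor.rel_prependChildren (h : NoSurvivor p) (hcard : (activeSites p).card = k + 2) :
    Multiset.Rel HasLabel (prependChildren activeSites p) (Label.children (.noSurvivor k)) := by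
  refine rel_prependChildren_cons hcard (hasLabel_prepend_zero h.isPermWord h.length_pos hcard)
    fun x hx hx0 => .noSurvivor (h.prepend_of_ne_zero hx hx0) ?_
  exact card_activeSites_prepend_of_not_survives hx (h.not_survives x)

theorem TopSurvivor.rel_prependChildren (h : TopSurvivor p i)
    (hcard : (activeSites p).card = k + 3) :
    Multiset.Rel HasLabel (prependChildren activeSites p) (Label.children (.topSurvivor k)) := by
  have hi := h.survives.mem
  have hpos := h.survives.pos
  have hlt := h.lt_length
  have htop : rankAbove (activeSites p) p.length = 0 :=
    rankAbove_eq_zero fun s hs => le_length_of_mem_activeSites hs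
  refine rel_prependChildren_cons_cons hi hpos h.eq_zero_of_lt hcard
    (hasLabel_prepend_zero h.isPermWord (hpos.trans hlt) hcard) (.topSurvivor h.prepend_self ?_)
    fun x hx hx0 hxi => .noSurvivor (h.prepend_of_ne hx hx0 hxi) ?_
  · have hnot (s) : ¬ Survives p i s := fun hs => hlt.ne ((h.survives_iff i s).1 hs).1
    rw [card_activeSites_prepend_of_not_survives hi hnot,
      rankAbove_add_two_of_forall_lt_eq_zero hi hpos h.eq_zero_of_lt, hcard]
  · by_cases hxtop : x = p.length
    · rw [hxtop, card_activeSites_prepend_of_survives_iff fun t => by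
        rw [h.survives_iff, eq_self, true_and], htop]
      rfl
    · have hrank : rankAbove (activeSites p) x ≠ 0 := fun h0 => hxtop <|
        (rankAbove_inj hx h.survives.used_mem).1 (h0.trans htop.symm)
      have hnot (s) : ¬ Survives p x s := fun hs => hxtop ((h.survives_iff x s).1 hs).1
      rw [card_activeSites_prepend_of_not_survives hx hnot,
        max_eq_right (Nat.one_le_iff_ne_zero.2 hrank)]

theorem DiagSurvivor.rel_prependChildren (h : DiagSurvivor p i)
    (hcard : (activeSites p).card = k + 4) :
    Multiset.Rel HasLabel (prependChildren activeSites p) (Label.children (.diagSurvivor k)) := by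
  have hi := h.survives.mem
  have hpos := h.survives.pos
  have hlt := h.lt_length
  refine rel_prependChildren_cons_cons hi hpos h.eq_zero_of_lt hcard
    (hasLabel_prepend_zero h.isPermWord (hpos.trans hlt) hcard) (.diagSurvivor h.prepend_self ?_)
    fun x hx hx0 hxi => .noSurvivor (h.prepend_of_ne hx hx0 hxi) ?_
  · have := rankAbove_add_two_of_forall_lt_eq_zero hi hpos h.eq_zero_of_lt
    rw [card_activeSites_prepend_of_survives_iff fun t => by rw [h.survives_iff, eq_self, true_and]]
    omega
  · exact card_activeSites_prepend_of_not_survives hx fun s hs => hxi ((h.survives_iff x s).1 hs).1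

theorem HasLabel.rel_prependChildren {ℓ : Label} (h : HasLabel p ℓ) :
    Multiset.Rel HasLabel (prependChildren activeSites p) ℓ.children := by
  rcases h with (_ | _ | n) | ⟨h, hcard⟩ | ⟨h, hcard⟩ | ⟨h, hcard⟩
  · exact rel_prependChildren_descending_zero
  · exact rel_prependChildren_descending_one
  · exact rel_prependChildren_descending_add_two n
  · exact h.rel_prependChildren hcard
  · exact h.rel_prependChildren hcard
  · exact h.rel_prependChildren hcard

end HasLabel

theorem avoiderGF_eq_treeGF :
    avoiderGF ({![1, 2, 0, 3], ![1, 3, 2, 0], ![2, 3, 0, 1]} : Set (Fin 4 → Fin 4)) =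
      treeGF ℚ Label.children (.decreasing 0) := by
  ext n
  rw [avoiderGF, treeGF, coeff_mk, coeff_mk, avoiderCount_eq_nodeCount,
    nodeCount_eq_of_rel (a := []) (fun _ _ => HasLabel.rel_prependChildren) n (.decreasing 0)]

/-! ### Solving the succession rule -/

section ClosedForm

variable {R : Type*} [CommRing R] {x c : R}

/-- The solution of the linear system given by the succession rule on labels, multiplied by
`1 - x * (1 - 2 * x) * c ^ 2`, when `c = 1 + x * c ^ 2`. It comes from the ansatz that it is affine
in `c ^ k`. -/
def closedForm (x c : R) : Label → R
  | .decreasing 0 => 1 + x ^ 2 * (1 - x) * c ^ 4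
  | .decreasing 1 => (1 - 2 * x) * c ^ 2 + x * (1 - x) * c ^ 4
  | .decreasing (_ + 2) => (1 - x) * c ^ 2 + x * c ^ 5
  | .noSurvivor k => (1 - x) * c ^ (k + 2)
  | .topSurvivor k => (1 - x) * c ^ (k + 3) + x * c ^ 3 - x * c ^ 2
  | .diagSurvivor k => (1 - x) * c ^ (k + 3) * (c ^ 2 - c + 1)

-- Since `x * c ^ 2 = c - 1`, the sum telescopes.
theorem mul_sum_closedForm_noSurvivor (hc : c = 1 + x * c ^ 2) (k : ℕ) :
    x * ∑ r ∈ Finset.range k, closedForm x c (.noSurvivor r) = (1 - x) * (c ^ k - 1) := by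
  have hsum : ∑ r ∈ Finset.range k, closedForm x c (.noSurvivor r) =
      (1 - x) * c ^ 2 * ∑ r ∈ Finset.range k, c ^ r := by
    rw [Finset.mul_sum]
    exact Finset.sum_congr rfl fun r _ => by rw [closedForm]; ring
  rw [hsum, ← mul_geom_sum]
  linear_combination (x - 1) * (∑ r ∈ Finset.range k, c ^ r) * hc

theorem mul_sum_closedForm_noSurvivor_max (hc : c = 1 + x * c ^ 2) (k : ℕ) :
    x * ∑ r ∈ Finset.range (k + 1), closedForm x c (.noSurvivor (max 1 r)) =
      (1 - x) * (c ^ (k + 1) - 1 + x * (c ^ 3 - c ^ 2)) := by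
  have hsum := mul_sum_closedForm_noSurvivor hc (k + 1)
  rw [Finset.sum_range_succ'] at hsum ⊢
  simp only [le_add_iff_nonneg_left, zero_le, max_eq_right, max_eq_left, closedForm] at hsum ⊢
  linear_combination hsum

theorem sum_map_map_range {M α : Type*} [AddCommMonoid M] (f : α → M) (g : ℕ → α) (n : ℕ) :
    (((Multiset.range n).map g).map f).sum = ∑ r ∈ Finset.range n, f (g r) := by
  rw [Multiset.map_map]
  rfl

theorem closedForm_eq (hc : c = 1 + x * c ^ 2) (ℓ : Label) :
    closedForm x c ℓ =
      (1 - x * (1 - 2 * x) * c ^ 2) + x * (ℓ.children.map (closedForm x c)).sum := by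
  match ℓ with
  | .decreasing 0 =>
    simp only [Label.children, Multiset.map_singleton, Multiset.sum_singleton, closedForm]
    ring
  | .decreasing 1 =>
    simp only [Label.children, Multiset.insert_eq_cons, Multiset.map_cons, Multiset.sum_cons,
      Multiset.map_singleton, Multiset.sum_singleton, closedForm]
    linear_combination (1 + c) * (1 + x * c ^ 2) * hc
  | .decreasing (n + 2) =>
    simp only [Label.children, Multiset.insert_eq_cons, Multiset.map_cons, Multiset.sum_cons,
      Multiset.map_singleton, Multiset.sum_singleton, closedForm]
    linear_combination (1 + c) * hc
  | .noSurvivor k =>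
    have hsum := mul_sum_closedForm_noSurvivor hc (k + 1)
    simp only [Label.children, Multiset.map_cons, Multiset.sum_cons, sum_map_map_range,
      closedForm] at hsum ⊢
    linear_combination -hsum + ((1 - x) * c ^ (k + 1) + x * (1 + c)) * hc
  | .topSurvivor k =>
    have hsum := mul_sum_closedForm_noSurvivor_max hc k
    simp only [Label.children, Multiset.map_cons, Multiset.sum_cons, sum_map_map_range,
      closedForm] at hsum ⊢
    linear_combination -hsum + ((1 - x) * c ^ (k + 1) * (1 + c) + x * (1 + c)) * hc
  | .diagSurvivor k =>
    have hsum := mul_sum_closedForm_noSurvivor hc (k + 2)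
    simp only [Label.children, Multiset.map_cons, Multiset.sum_cons, sum_map_map_range,
      closedForm] at hsum ⊢
    linear_combination -hsum + ((1 - x) * c ^ (k + 2) * (1 + c ^ 2) + x * (1 + c)) * hc

end ClosedForm

theorem catalanGF_eq : catalanGF = 1 + X * catalanGF ^ 2 := by
  have hmap : catalanGF = catalanSeries.map (Nat.castRingHom ℚ) := by
    ext n
    simp [catalanGF]
  have h := congrArg (PowerSeries.map (Nat.castRingHom ℚ)) catalanSeries_sq_mul_X_add_one
  simp only [map_add, map_mul, map_pow, map_X, map_one, ← hmap] at h
  linear_combination -h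

theorem statement_12 :
    ((1 : PowerSeries ℚ) - X * (1 - 2*X) * catalanGF^2) * avoiderGF ({![1,2,0,3], ![1,3,2,0], ![2,3,0,1]} : Set (Fin 4 → Fin 4)) =
      1 + X^2 * (1 - X) * catalanGF^4 := by
  rw [avoiderGF_eq_treeGF]
  exact (eq_mul_treeGF (closedForm_eq catalanGF_eq) (.decreasing 0)).symm
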